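/- arXiv:1410.1468 — 5 statements merged into one kernel-verified Lean document; each statement's English description precedes it below -/
import Mathlib

section
/- For all smooth functions A, B, C, D on an open set U ⊆ ℝ², the curvature one-form and the Cahen–Gutt moment map of the associated symplectic connection ∇ = ∂ + Π satisfy the identity ∂_x ρ₂ − ∂_y ρ₁ = −2K on U (equivalently dρ = −2K·Ω). In particular K vanishes identically on U if and only if ρ is a closed one-form. -/
/-! The identity is a pointwise computation with third-order jets. Since `U` is open, `px` and `py`
agree on `U` with Fréchet derivatives in the directions `(1,0)` and `(0,1)`; hence they preserve
smoothness on `U` (`SmoothOn2.px`, `SmoothOn2.py`), obey the Leibniz rule there, and commute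
(`SmoothOn2.px_py_comm`, symmetry of the second derivative).

Write `Q = AD - BC`. In `∂ₓρ₂ - ∂ᵧρ₁` the third-order terms and the second derivatives of
`AC - D²` and `A² - BD` match those of `-2K` after commuting partials, and `Q_xy` occurs with
coefficient `-2` inside the bracket instead of `-3`. The missing `-Q_xy`, together with the Poisson
bracket terms of `K`, comes from `(-2D·A_y + A·D_y + C·B_y)_x - (2A·D_x - D·A_x - B·C_x)_y`, which
is seen by expanding `Q_xy` with the Leibniz rule. -/

set_option linter.unusedVariables false

noncomputable section

/-- Partial derivative with respect to the first variable. -/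
def px (f : ℝ → ℝ → ℝ) : ℝ → ℝ → ℝ := fun x y => deriv (fun s => f s y) x

/-- Partial derivative with respect to the second variable. -/
def py (f : ℝ → ℝ → ℝ) : ℝ → ℝ → ℝ := fun x y => deriv (fun s => f x s) y

/-- Smoothness on a subset of the plane, for a curried function of two real variables. -/
def SmoothOn2 (f : ℝ → ℝ → ℝ) (U : Set (ℝ × ℝ)) : Prop :=
  ContDiffOn ℝ (⊤ : ℕ∞) (Function.uncurry f) U

/-- Smoothness on the whole plane, for a curried function of two real variables. -/
def Smooth2 (f : ℝ → ℝ → ℝ) : Prop :=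
  ContDiff ℝ (⊤ : ℕ∞) (Function.uncurry f)

/-- First component ρ₁ of the curvature one-form ρ = ρ₁dx + ρ₂dy of the symplectic
connection ∇ = ∂ + Π determined by the functions A, B, C, D in Darboux coordinates. -/
def rho1 (A B C D : ℝ → ℝ → ℝ) : ℝ → ℝ → ℝ := fun x y =>
  (-2) * ((-2) * py (px A) x y - py (py B) x y - px (px D) x y
    + px (fun x' y' => A x' y' * D x' y' - B x' y' * C x' y') x y
    + 3 * py (fun x' y' => A x' y' ^ 2 - B x' y' * D x' y') x y
    + 2 * A x y * px D x y - D x y * px A x y - B x y * px C x y)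

/-- Second component ρ₂ of the curvature one-form. -/
def rho2 (A B C D : ℝ → ℝ → ℝ) : ℝ → ℝ → ℝ := fun x y =>
  (-2) * (2 * py (px D) x y + py (py A) x y + px (px C) x y
    + 3 * px (fun x' y' => A x' y' * C x' y' - D x' y' ^ 2) x y
    - py (fun x' y' => A x' y' * D x' y' - B x' y' * C x' y') x y
    - 2 * D x y * py A x y + A x y * py D x y + C x y * py B x y)

/-- The Cahen–Gutt moment map K(∇) of the symplectic connection ∇ = ∂ + Π. -/
def Kmap (A B C D : ℝ → ℝ → ℝ) : ℝ → ℝ → ℝ := fun x y =>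
  3 * py (py (px A)) x y + 3 * py (px (px D)) x y
    + py (py (py B)) x y + px (px (px C)) x y
    - px B x y * py C x y + py B x y * px C x y
    + 3 * (px A x y * py D x y - py A x y * px D x y)
    + 3 * px (px (fun x' y' => A x' y' * C x' y' - D x' y' ^ 2)) x y
    + 3 * py (py (fun x' y' => B x' y' * D x' y' - A x' y' ^ 2)) x y
    - 3 * py (px (fun x' y' => A x' y' * D x' y' - B x' y' * C x' y')) x y

/-- First component of −H(k), the dx⊗dx⊗dx component of the criticality operator. -/
def E1 (A B C D k : ℝ → ℝ → ℝ) : ℝ → ℝ → ℝ := fun x y =>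
  px (px (px k)) x y - 3 * A x y * px (px k) x y - 3 * B x y * py (px k) x y
    + px k x y * py B x y - px B x y * py k x y

/-- The dy⊗dy⊗dy component of the criticality operator. -/
def E2 (A B C D k : ℝ → ℝ → ℝ) : ℝ → ℝ → ℝ := fun x y =>
  py (py (py k)) x y - 3 * D x y * py (py k) x y - 3 * C x y * py (px k) x y
    + py k x y * px C x y - py C x y * px k x y

/-- The dx⊙dx⊙dy component of the criticality operator. -/
def E3 (A B C D k : ℝ → ℝ → ℝ) : ℝ → ℝ → ℝ := fun x y =>
  py (px (px k)) x y + 2 * D x y * px (px k) x y - B x y * py (py k) x y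
    + A x y * py (px k) x y + px A x y * py k x y - py A x y * px k x y

/-- The dx⊙dy⊙dy component of the criticality operator. -/
def E4 (A B C D k : ℝ → ℝ → ℝ) : ℝ → ℝ → ℝ := fun x y =>
  py (py (px k)) x y + 2 * A x y * py (py k) x y - C x y * px (px k) x y
    + D x y * py (px k) x y + py D x y * px k x y - px D x y * py k x y

/-- ∇ = ∂ + Π is critical symplectic on U: the four components of H(K(∇)) vanish on U. -/
def Critical (A B C D : ℝ → ℝ → ℝ) (U : Set (ℝ × ℝ)) : Prop :=
  ∀ p ∈ U, E1 A B C D (Kmap A B C D) p.1 p.2 = 0 ∧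
    E2 A B C D (Kmap A B C D) p.1 p.2 = 0 ∧
    E3 A B C D (Kmap A B C D) p.1 p.2 = 0 ∧
    E4 A B C D (Kmap A B C D) p.1 p.2 = 0

/-- Ricci component R₁₁. -/
def R11 (A B C D : ℝ → ℝ → ℝ) : ℝ → ℝ → ℝ := fun x y =>
  px A x y + py B x y + 2 * (B x y * D x y - A x y ^ 2)

/-- Ricci component R₂₂. -/
def R22 (A B C D : ℝ → ℝ → ℝ) : ℝ → ℝ → ℝ := fun x y =>
  px C x y + py D x y + 2 * (A x y * C x y - D x y ^ 2)

/-- Ricci component R₁₂ = R₂₁. -/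
def R12 (A B C D : ℝ → ℝ → ℝ) : ℝ → ℝ → ℝ := fun x y =>
  - py A x y - px D x y + A x y * D x y - B x y * C x y

/-- (∇_x Ric)_{xx}, using Γ^x_{xx}=A, Γ^y_{xx}=B, Γ^x_{xy}=−D, Γ^y_{xy}=−A, Γ^x_{yy}=C, Γ^y_{yy}=D. -/
def nxRxx (A B C D : ℝ → ℝ → ℝ) : ℝ → ℝ → ℝ := fun x y =>
  px (R11 A B C D) x y
    - 2 * (A x y * R11 A B C D x y + B x y * R12 A B C D x y)

/-- (∇_y Ric)_{xx}. -/
def nyRxx (A B C D : ℝ → ℝ → ℝ) : ℝ → ℝ → ℝ := fun x y =>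
  py (R11 A B C D) x y
    - 2 * ((-(D x y)) * R11 A B C D x y + (-(A x y)) * R12 A B C D x y)

/-- (∇_x Ric)_{xy}. -/
def nxRxy (A B C D : ℝ → ℝ → ℝ) : ℝ → ℝ → ℝ := fun x y =>
  px (R12 A B C D) x y
    - (A x y * R12 A B C D x y + B x y * R22 A B C D x y)
    - ((-(D x y)) * R11 A B C D x y + (-(A x y)) * R12 A B C D x y)

/-- (∇_y Ric)_{xy}. -/
def nyRxy (A B C D : ℝ → ℝ → ℝ) : ℝ → ℝ → ℝ := fun x y =>
  py (R12 A B C D) x y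
    - ((-(D x y)) * R12 A B C D x y + (-(A x y)) * R22 A B C D x y)
    - (C x y * R11 A B C D x y + D x y * R12 A B C D x y)

/-- (∇_x Ric)_{yy}. -/
def nxRyy (A B C D : ℝ → ℝ → ℝ) : ℝ → ℝ → ℝ := fun x y =>
  px (R22 A B C D) x y
    - 2 * ((-(D x y)) * R12 A B C D x y + (-(A x y)) * R22 A B C D x y)

/-- (∇_y Ric)_{yy}. -/
def nyRyy (A B C D : ℝ → ℝ → ℝ) : ℝ → ℝ → ℝ := fun x y =>
  py (R22 A B C D) x y
    - 2 * (C x y * R12 A B C D x y + D x y * R22 A B C D x y)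

/-- ∇ = ∂ + Π is preferred on U: the symmetrized covariant derivative of Ric vanishes on U. -/
def Preferred (A B C D : ℝ → ℝ → ℝ) (U : Set (ℝ × ℝ)) : Prop :=
  ∀ p ∈ U, nxRxx A B C D p.1 p.2 = 0 ∧
    2 * nxRxy A B C D p.1 p.2 + nyRxx A B C D p.1 p.2 = 0 ∧
    2 * nyRxy A B C D p.1 p.2 + nxRyy A B C D p.1 p.2 = 0 ∧
    nyRyy A B C D p.1 p.2 = 0

section Partials

variable {U : Set (ℝ × ℝ)} {f g : ℝ → ℝ → ℝ} {x y : ℝ}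

lemma SmoothOn2.differentiableAt (hf : SmoothOn2 f U) (hU : IsOpen U) (h : (x, y) ∈ U) :
    DifferentiableAt ℝ (Function.uncurry f) (x, y) :=
  ((show ContDiffOn ℝ (⊤ : ℕ∞) (Function.uncurry f) U from hf).contDiffAt
    (hU.mem_nhds h)).differentiableAt (by simp)

lemma hasDerivAt_fst_of_differentiableAt (h : DifferentiableAt ℝ (Function.uncurry f) (x, y)) :
    HasDerivAt (fun s => f s y) (fderiv ℝ (Function.uncurry f) (x, y) (1, 0)) x :=
  HasFDerivAt.comp_hasDerivAt (f := fun s : ℝ => (s, y)) x h.hasFDerivAt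
    ((hasDerivAt_id x).prodMk (hasDerivAt_const x y))

lemma hasDerivAt_snd_of_differentiableAt (h : DifferentiableAt ℝ (Function.uncurry f) (x, y)) :
    HasDerivAt (fun s => f x s) (fderiv ℝ (Function.uncurry f) (x, y) (0, 1)) y :=
  HasFDerivAt.comp_hasDerivAt (f := fun s : ℝ => (x, s)) y h.hasFDerivAt
    ((hasDerivAt_const y x).prodMk (hasDerivAt_id y))

lemma SmoothOn2.px_eq_fderiv (hf : SmoothOn2 f U) (hU : IsOpen U) (h : (x, y) ∈ U) :
    px f x y = fderiv ℝ (Function.uncurry f) (x, y) (1, 0) :=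
  (hasDerivAt_fst_of_differentiableAt (hf.differentiableAt hU h)).deriv

lemma SmoothOn2.py_eq_fderiv (hf : SmoothOn2 f U) (hU : IsOpen U) (h : (x, y) ∈ U) :
    py f x y = fderiv ℝ (Function.uncurry f) (x, y) (0, 1) :=
  (hasDerivAt_snd_of_differentiableAt (hf.differentiableAt hU h)).deriv

lemma SmoothOn2.hasDerivAt_px (hf : SmoothOn2 f U) (hU : IsOpen U) (h : (x, y) ∈ U) :
    HasDerivAt (fun s => f s y) (px f x y) x :=
  (hasDerivAt_fst_of_differentiableAt (hf.differentiableAt hU h)).differentiableAt.hasDerivAt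

lemma SmoothOn2.hasDerivAt_py (hf : SmoothOn2 f U) (hU : IsOpen U) (h : (x, y) ∈ U) :
    HasDerivAt (fun s => f x s) (py f x y) y :=
  (hasDerivAt_snd_of_differentiableAt (hf.differentiableAt hU h)).differentiableAt.hasDerivAt

lemma SmoothOn2.contDiffOn_fderiv (hf : SmoothOn2 f U) (hU : IsOpen U) :
    ContDiffOn ℝ (⊤ : ℕ∞) (fderiv ℝ (Function.uncurry f)) U :=
  ContDiffOn.fderiv_of_isOpen hf hU (by simp)

lemma SmoothOn2.px (hf : SmoothOn2 f U) (hU : IsOpen U) : SmoothOn2 (px f) U :=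
  ((hf.contDiffOn_fderiv hU).clm_apply (contDiffOn_const (c := ((1, 0) : ℝ × ℝ)))).congr
    fun _ hp => hf.px_eq_fderiv hU hp

lemma SmoothOn2.py (hf : SmoothOn2 f U) (hU : IsOpen U) : SmoothOn2 (py f) U :=
  ((hf.contDiffOn_fderiv hU).clm_apply (contDiffOn_const (c := ((0, 1) : ℝ × ℝ)))).congr
    fun _ hp => hf.py_eq_fderiv hU hp

/-- Partial derivatives at a point of an open set depend only on the values on that set. -/
lemma px_congr_of_isOpen (hU : IsOpen U) (hfg : ∀ x y, (x, y) ∈ U → f x y = g x y)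
    (h : (x, y) ∈ U) : px f x y = px g x y := by
  have hc : ContinuousAt (fun s : ℝ => (s, y)) x := by fun_prop
  apply Filter.EventuallyEq.deriv_eq
  filter_upwards [hc.preimage_mem_nhds (hU.mem_nhds h)] with s hs using hfg s y hs

lemma py_congr_of_isOpen (hU : IsOpen U) (hfg : ∀ x y, (x, y) ∈ U → f x y = g x y)
    (h : (x, y) ∈ U) : py f x y = py g x y := by
  have hc : ContinuousAt (fun s : ℝ => (x, s)) y := by fun_prop
  apply Filter.EventuallyEq.deriv_eq
  filter_upwards [hc.preimage_mem_nhds (hU.mem_nhds h)] with s hs using hfg x s hs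

lemma SmoothOn2.px_py_comm (hf : SmoothOn2 f U) (hU : IsOpen U) (h : (x, y) ∈ U) :
    _root_.px (_root_.py f) x y = _root_.py (_root_.px f) x y := by
  have hd : DifferentiableAt ℝ (fderiv ℝ (Function.uncurry f)) (x, y) :=
    ((hf.contDiffOn_fderiv hU).contDiffAt (hU.mem_nhds h)).differentiableAt (by simp)
  have hsymm : IsSymmSndFDerivAt ℝ (Function.uncurry f) (x, y) :=
    ((show ContDiffOn ℝ (⊤ : ℕ∞) (Function.uncurry f) U from hf).contDiffAt
      (hU.mem_nhds h)).isSymmSndFDerivAt (by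
        simp only [minSmoothness_of_isRCLikeNormedField]; exact WithTop.coe_le_coe.2 (le_top (a := (2 : ℕ∞))))
  have hx : HasDerivAt (fun s => fderiv ℝ (Function.uncurry f) (s, y) (0, 1))
      (fderiv ℝ (fderiv ℝ (Function.uncurry f)) (x, y) (1, 0) (0, 1)) x := by
    simpa using (HasFDerivAt.comp_hasDerivAt (f := fun s : ℝ => (s, y)) x hd.hasFDerivAt
      ((hasDerivAt_id x).prodMk (hasDerivAt_const x y))).clm_apply
        (hasDerivAt_const x ((0, 1) : ℝ × ℝ))
  have hy : HasDerivAt (fun s => fderiv ℝ (Function.uncurry f) (x, s) (1, 0))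
      (fderiv ℝ (fderiv ℝ (Function.uncurry f)) (x, y) (0, 1) (1, 0)) y := by
    simpa using (HasFDerivAt.comp_hasDerivAt (f := fun s : ℝ => (x, s)) y hd.hasFDerivAt
      ((hasDerivAt_const y x).prodMk (hasDerivAt_id y))).clm_apply
        (hasDerivAt_const y ((1, 0) : ℝ × ℝ))
  rw [px_congr_of_isOpen hU (g := fun x y => fderiv ℝ (Function.uncurry f) (x, y) (0, 1))
      (fun _ _ => hf.py_eq_fderiv hU) h,
    py_congr_of_isOpen hU (g := fun x y => fderiv ℝ (Function.uncurry f) (x, y) (1, 0))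
      (fun _ _ => hf.px_eq_fderiv hU) h]
  exact hx.deriv.trans ((hsymm _ _).trans hy.deriv.symm)

end Partials

/-- The identity `∂ₓρ₂ - ∂ᵧρ₁ = -2K` at a single point of `U`. -/
lemma px_rho2_sub_py_rho1 {U : Set (ℝ × ℝ)} (hU : IsOpen U) {A B C D : ℝ → ℝ → ℝ}
    (hA : SmoothOn2 A U) (hB : SmoothOn2 B U) (hC : SmoothOn2 C U) (hD : SmoothOn2 D U)
    {x y : ℝ} (h : (x, y) ∈ U) :
    px (rho2 A B C D) x y - py (rho1 A B C D) x y = -2 * Kmap A B C D x y := by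
  have hP : SmoothOn2 (fun x' y' => A x' y' * C x' y' - D x' y' ^ 2) U :=
    (ContDiffOn.mul hA hC).sub (ContDiffOn.pow hD 2)
  have hQ : SmoothOn2 (fun x' y' => A x' y' * D x' y' - B x' y' * C x' y') U :=
    (ContDiffOn.mul hA hD).sub (ContDiffOn.mul hB hC)
  have hR : SmoothOn2 (fun x' y' => A x' y' ^ 2 - B x' y' * D x' y') U :=
    (ContDiffOn.pow hA 2).sub (ContDiffOn.mul hB hD)
  have dx {f : ℝ → ℝ → ℝ} (hf : SmoothOn2 f U) := hf.hasDerivAt_px hU h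
  have dy {f : ℝ → ℝ → ℝ} (hf : SmoothOn2 f U) := hf.hasDerivAt_py hU h
  have e2 := ((((((((((dx ((hD.px hU).py hU)).const_mul 2).add (dx ((hA.py hU).py hU))).add
    (dx ((hC.px hU).px hU))).add ((dx (hP.px hU)).const_mul 3)).sub (dx (hQ.py hU))).sub
    (((dx hD).const_mul 2).mul (dx (hA.py hU)))).add ((dx hA).mul (dx (hD.py hU)))).add
    ((dx hC).mul (dx (hB.py hU)))).const_mul (-2)).deriv
  have e1 := ((((((((((dy ((hA.px hU).py hU)).const_mul (-2)).sub (dy ((hB.py hU).py hU))).sub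
    (dy ((hD.px hU).px hU))).add (dy (hQ.px hU))).add ((dy (hR.py hU)).const_mul 3)).add
    (((dy hA).const_mul 2).mul (dy (hD.px hU)))).sub ((dy hD).mul (dy (hA.px hU)))).sub
    ((dy hB).mul (dy (hC.px hU)))).const_mul (-2)).deriv
  have e2' : px (rho2 A B C D) x y = _ := e2
  have e1' : py (rho1 A B C D) x y = _ := e1
  -- the Leibniz expansion of the mixed derivative of `AD - BC`
  have eQ : py (px (fun x' y' => A x' y' * D x' y' - B x' y' * C x' y')) x y = _ :=
    (py_congr_of_isOpen hU (g := fun x y => px A x y * D x y + A x y * px D x y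
        - (px B x y * C x y + B x y * px C x y))
      (fun x y h => (((hA.hasDerivAt_px hU h).mul (hD.hasDerivAt_px hU h)).sub
        ((hB.hasDerivAt_px hU h).mul (hC.hasDerivAt_px hU h))).deriv) h).trans
    ((((dy (hA.px hU)).mul (dy hD)).add ((dy hA).mul (dy (hD.px hU)))).sub
      (((dy (hB.px hU)).mul (dy hC)).add ((dy hB).mul (dy (hC.px hU))))).deriv
  have eR : py (py (fun x' y' => B x' y' * D x' y' - A x' y' ^ 2)) x y
      = -py (py (fun x' y' => A x' y' ^ 2 - B x' y' * D x' y')) x y :=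
    (py_congr_of_isOpen hU
      (g := fun x y => -py (fun x' y' => A x' y' ^ 2 - B x' y' * D x' y') x y)
      (fun x y h => by
        rw [← (hR.hasDerivAt_py hU h).neg.deriv]
        exact py_congr_of_isOpen hU
          (g := fun x y => -(A x y ^ 2 - B x y * D x y)) (fun _ _ _ => by ring) h) h).trans
    (dy (hR.py hU)).neg.deriv
  have eA : px (py (py A)) x y = py (py (px A)) x y :=
    ((hA.py hU).px_py_comm hU h).trans
      (py_congr_of_isOpen hU (fun _ _ => hA.px_py_comm hU) h)
  rw [e2', e1', (hD.px hU).px_py_comm hU h, eA, hQ.px_py_comm hU h,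
    hA.px_py_comm hU h, hB.px_py_comm hU h, hD.px_py_comm hU h]
  unfold Kmap
  rw [eR, eQ]
  ring

/-- On a symplectic surface in Darboux coordinates, ∂_xρ₂ − ∂_yρ₁ = −2K
(i.e. dρ = −2K·Ω); in particular K ≡ 0 on U iff ρ is closed on U. -/
theorem stmt0 (U : Set (ℝ × ℝ)) (hU : IsOpen U) (A B C D : ℝ → ℝ → ℝ)
    (hA : SmoothOn2 A U) (hB : SmoothOn2 B U) (hC : SmoothOn2 C U)
    (hD : SmoothOn2 D U) :
    (∀ p ∈ U, px (rho2 A B C D) p.1 p.2 - py (rho1 A B C D) p.1 p.2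
        = -2 * Kmap A B C D p.1 p.2) ∧
    ((∀ p ∈ U, Kmap A B C D p.1 p.2 = 0) ↔
      (∀ p ∈ U, px (rho2 A B C D) p.1 p.2 - py (rho1 A B C D) p.1 p.2 = 0)) := by
  have key : ∀ p ∈ U, px (rho2 A B C D) p.1 p.2 - py (rho1 A B C D) p.1 p.2
      = -2 * Kmap A B C D p.1 p.2 := fun p hp => px_rho2_sub_py_rho1 hU hA hB hC hD hp
  refine ⟨key, forall₂_congr fun p hp => ?_⟩
  rw [key p hp]
  simp
end
end

section
/- Let A, B, C, D be smooth functions on a connected open set U ⊆ ℝ² such that the symplectic connection ∇ = ∂ + Π is critical, i.e. E₁(K) = E₂(K) = E₃(K) = E₄(K) = 0 on U. Then the function K² + K_x·ρ₂ − K_y·ρ₁ (which equals K² + ρ(H_K), where H_K = (−K_y, K_x) is the Hamiltonian vector field of K) is constant on U. -/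
/-!
The vector field `H_K = (-K_y, K_x)` satisfies `L_{H_K} Π = (-E₃, E₁, -E₂, E₄)(K)` in the components
`(A, B, C, D)`, where the Lie derivative is that of the whole connection `∂ + Π`. So criticality
says that `H_K` is an infinitesimal automorphism of `∇`. As `ρ` is built naturally from `∇`, its Lie
derivative `L_{H_K} ρ` is the linearization of `ρ` applied to `L_{H_K} Π`, hence is zero. Since also
`dρ = -2 K dx ∧ dy`, Cartan's formula turns `L_{H_K} ρ = 0` into `d (K² + ρ(H_K)) = 0`, and `U` is
connected.

These facts are differential-polynomial identities, and are proved in an arbitrary commutative ring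
with two commuting derivations (`lie_rho1`, `lie_rho2`, `curl_rho`, `criticality_dx`,
`criticality_dy`). They are applied to the ring `SmoothRing U` of smooth functions on `U`; the
predicate `Rep` relates functions on the plane with their restrictions to `U`.
-/

set_option linter.unusedVariables false

noncomputable section

/-! ### Identities in a ring with two commuting derivations -/

namespace DiffRing

variable {R : Type*} [CommRing R] (d e : Derivation ℤ R R)

/-- `ρ₁` in a ring with derivations `d = ∂_x` and `e = ∂_y`. -/
def rho1 (A B C D : R) : R :=
  (-2) * ((-2) * e (d A) - e (e B) - d (d D) + d (A * D - B * C) + 3 * e (A ^ 2 - B * D)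
    + 2 * A * d D - D * d A - B * d C)

/-- `ρ₂` in a ring with derivations `d = ∂_x` and `e = ∂_y`. -/
def rho2 (A B C D : R) : R :=
  (-2) * (2 * e (d D) + e (e A) + d (d C) + 3 * d (A * C - D ^ 2) - e (A * D - B * C)
    - 2 * D * e A + A * e D + C * e B)

/-- The Cahen–Gutt moment map in a ring with derivations `d = ∂_x` and `e = ∂_y`. -/
def moment (A B C D : R) : R :=
  3 * e (e (d A)) + 3 * e (d (d D)) + e (e (e B)) + d (d (d C))
    - d B * e C + e B * d C + 3 * (d A * e D - e A * d D)
    + 3 * d (d (A * C - D ^ 2)) + 3 * e (e (B * D - A ^ 2)) - 3 * e (d (A * D - B * C))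

/-- The component `E₁` of the criticality operator. -/
def crit1 (A B k : R) : R :=
  d (d (d k)) - 3 * A * d (d k) - 3 * B * e (d k) + d k * e B - d B * e k

/-- The component `E₂` of the criticality operator. -/
def crit2 (C D k : R) : R :=
  e (e (e k)) - 3 * D * e (e k) - 3 * C * e (d k) + e k * d C - e C * d k

/-- The component `E₃` of the criticality operator. -/
def crit3 (A B D k : R) : R :=
  e (d (d k)) + 2 * D * d (d k) - B * e (e k) + A * e (d k) + d A * e k - e A * d k

/-- The component `E₄` of the criticality operator. -/
def crit4 (A C D k : R) : R :=
  e (e (d k)) + 2 * A * e (e k) - C * d (d k) + D * e (d k) + e D * d k - d D * e k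

/-- The linearization of `rho1` at `(A, B, C, D)` in the direction `(a, b, c, q)`. -/
def linRho1 (A B C D a b c q : R) : R :=
  -2 * (-2 * e (d a) - e (e b) - d (d q) + d (a * D + A * q - b * C - B * c)
    + 3 * e (2 * A * a - b * D - B * q)
    + 2 * (a * d D + A * d q) - (q * d A + D * d a) - (b * d C + B * d c))

/-- The linearization of `rho2` at `(A, B, C, D)` in the direction `(a, b, c, q)`. -/
def linRho2 (A B C D a b c q : R) : R :=
  -2 * (2 * e (d q) + e (e a) + d (d c) + 3 * d (a * C + A * c - 2 * D * q)
    - e (a * D + A * q - b * C - B * c)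
    - 2 * (q * e A + D * e a) + (a * e D + A * e q) + (c * e B + C * e b))

theorem map_two : d (2 : R) = 0 := by exact_mod_cast d.map_natCast 2

theorem map_three : d (3 : R) = 0 := by exact_mod_cast d.map_natCast 3

/-- The `dx` component of `L_{H_k} ρ` is the linearization of `ρ₁` along `L_{H_k} Π`. -/
theorem lie_rho1 (h : ∀ f, d (e f) = e (d f)) (A B C D k : R) :
    -(e k) * d (rho1 d e A B C D) + d k * e (rho1 d e A B C D) - e (d k) * rho1 d e A B C D
      + d (d k) * rho2 d e A B C D
    = linRho1 d e A B C D (-crit3 d e A B D k) (crit1 d e A B k) (-crit2 d e C D k)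
      (crit4 d e A C D k) := by
  simp only [linRho1, crit1, crit2, crit3, crit4, rho1, rho2, map_add, map_sub, map_neg,
    Derivation.leibniz, smul_eq_mul, map_two, map_three, map_zero, pow_two, h]
  ring

/-- The `dy` component of `L_{H_k} ρ` is the linearization of `ρ₂` along `L_{H_k} Π`. -/
theorem lie_rho2 (h : ∀ f, d (e f) = e (d f)) (A B C D k : R) :
    -(e k) * d (rho2 d e A B C D) + d k * e (rho2 d e A B C D) - e (e k) * rho1 d e A B C D
      + e (d k) * rho2 d e A B C D
    = linRho2 d e A B C D (-crit3 d e A B D k) (crit1 d e A B k) (-crit2 d e C D k)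
      (crit4 d e A C D k) := by
  simp only [linRho2, crit1, crit2, crit3, crit4, rho1, rho2, map_add, map_sub, map_neg,
    Derivation.leibniz, smul_eq_mul, map_two, map_three, map_zero, pow_two, h]
  ring

/-- `dρ = -2 K dx ∧ dy`. -/
theorem curl_rho (h : ∀ f, d (e f) = e (d f)) (A B C D : R) :
    d (rho2 d e A B C D) - e (rho1 d e A B C D) = -2 * moment d e A B C D := by
  simp only [moment, rho1, rho2, map_add, map_sub, map_neg, Derivation.leibniz, smul_eq_mul,
    map_two, map_three, pow_two, h]
  ring

theorem criticality_dx (h : ∀ f, d (e f) = e (d f)) (A B C D k : R)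
    (hk : k = moment d e A B C D)
    (h1 : crit1 d e A B k = 0) (h2 : crit2 d e C D k = 0)
    (h3 : crit3 d e A B D k = 0) (h4 : crit4 d e A C D k = 0) :
    d (k ^ 2 + d k * rho2 d e A B C D - e k * rho1 d e A B C D) = 0 := by
  have hl := lie_rho1 d e h A B C D k
  have hc := curl_rho d e h A B C D
  rw [h1, h2, h3, h4] at hl
  rw [← hk] at hc
  simp only [linRho1, neg_zero, zero_mul, mul_zero, map_zero, add_zero, sub_zero] at hl
  simp only [map_add, map_sub, Derivation.leibniz, smul_eq_mul, pow_two, h]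
  linear_combination hl + d k * hc

theorem criticality_dy (h : ∀ f, d (e f) = e (d f)) (A B C D k : R)
    (hk : k = moment d e A B C D)
    (h1 : crit1 d e A B k = 0) (h2 : crit2 d e C D k = 0)
    (h3 : crit3 d e A B D k = 0) (h4 : crit4 d e A C D k = 0) :
    e (k ^ 2 + d k * rho2 d e A B C D - e k * rho1 d e A B C D) = 0 := by
  have hl := lie_rho2 d e h A B C D k
  have hc := curl_rho d e h A B C D
  rw [h1, h2, h3, h4] at hl
  rw [← hk] at hc
  simp only [linRho2, neg_zero, zero_mul, mul_zero, map_zero, add_zero, sub_zero] at hl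
  simp only [map_add, map_sub, Derivation.leibniz, smul_eq_mul, pow_two]
  linear_combination hl + e k * hc

end DiffRing

/-! ### The ring of smooth functions on an open set -/

/-- The ring of smooth functions on `U`, as the functions `U → ℝ` that are restrictions of functions
on the plane which are smooth on `U`. -/
def SmoothRing (U : Set (ℝ × ℝ)) : Subring (U → ℝ) where
  carrier := {r | ∃ f : ℝ × ℝ → ℝ, ContDiffOn ℝ (⊤ : ℕ∞) f U ∧ ∀ u : U, r u = f u}
  mul_mem' := by
    rintro r s ⟨f, hf, hr⟩ ⟨g, hg, hs⟩
    exact ⟨fun p => f p * g p, hf.mul hg, fun u => by simp [hr, hs]⟩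
  one_mem' := ⟨fun _ => 1, contDiffOn_const, fun _ => rfl⟩
  add_mem' := by
    rintro r s ⟨f, hf, hr⟩ ⟨g, hg, hs⟩
    exact ⟨fun p => f p + g p, hf.add hg, fun u => by simp [hr, hs]⟩
  zero_mem' := ⟨fun _ => 0, contDiffOn_const, fun _ => rfl⟩
  neg_mem' := by
    rintro r ⟨f, hf, hr⟩
    exact ⟨fun p => -f p, hf.neg, fun u => by simp [hr]⟩

namespace SmoothRing

variable {U : Set (ℝ × ℝ)}

/-- A function on the plane, smooth on `U`, whose restriction to `U` is `r`. -/
def lift (r : SmoothRing U) : ℝ × ℝ → ℝ := r.2.choose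

theorem lift_smooth (r : SmoothRing U) : ContDiffOn ℝ (⊤ : ℕ∞) (lift r) U := r.2.choose_spec.1

theorem lift_apply (r : SmoothRing U) (u : U) : r.1 u = lift r u := r.2.choose_spec.2 u

theorem two_le_top : (2 : WithTop ℕ∞) ≤ ((⊤ : ℕ∞) : WithTop ℕ∞) :=
  WithTop.coe_le_coe.2 (le_top : (2 : ℕ∞) ≤ ⊤)

theorem contDiffOn_fderiv_apply (hU : IsOpen U) {f : ℝ × ℝ → ℝ}
    (hf : ContDiffOn ℝ (⊤ : ℕ∞) f U) (v : ℝ × ℝ) :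
    ContDiffOn ℝ (⊤ : ℕ∞) (fun p => fderiv ℝ f p v) U :=
  (hf.fderiv_of_isOpen hU (by simp)).clm_apply contDiffOn_const

theorem differentiableAt (hU : IsOpen U) {f : ℝ × ℝ → ℝ}
    (hf : ContDiffOn ℝ (⊤ : ℕ∞) f U) {p : ℝ × ℝ} (hp : p ∈ U) : DifferentiableAt ℝ f p :=
  (hf.contDiffAt (hU.mem_nhds hp)).differentiableAt (by simp)

/-- The directional derivative of a smooth function on `U`. -/
def dirFun (hU : IsOpen U) (v : ℝ × ℝ) (r : SmoothRing U) : SmoothRing U :=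
  ⟨fun u => fderiv ℝ (lift r) u v, _, contDiffOn_fderiv_apply hU (lift_smooth r) v, fun _ => rfl⟩

/-- The directional derivative does not depend on the chosen extension from `U` to the plane. -/
theorem dirFun_apply (hU : IsOpen U) (v : ℝ × ℝ) (r : SmoothRing U) (f : ℝ × ℝ → ℝ)
    (hr : ∀ u : U, r.1 u = f u) (u : U) : (dirFun hU v r).1 u = fderiv ℝ f u v := by
  have heq : lift r =ᶠ[nhds (u : ℝ × ℝ)] f := by
    filter_upwards [hU.mem_nhds u.2] with p hp
    rw [← lift_apply r ⟨p, hp⟩, hr ⟨p, hp⟩]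
  change fderiv ℝ (lift r) u v = _
  rw [heq.fderiv_eq]

/-- The directional derivative along `v` as a derivation of the ring of smooth functions. -/
def dir (hU : IsOpen U) (v : ℝ × ℝ) : Derivation ℤ (SmoothRing U) (SmoothRing U) :=
  Derivation.mk'
    (AddMonoidHom.toIntLinearMap (AddMonoidHom.mk' (dirFun hU v) (by
      intro r s
      ext u
      rw [dirFun_apply hU v (r + s) (lift r + lift s)
        (fun u => congrArg₂ (· + ·) (lift_apply r u) (lift_apply s u))]
      rw [fderiv_add (differentiableAt hU (lift_smooth r) u.2)
        (differentiableAt hU (lift_smooth s) u.2)]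
      rfl)))
    (by
      intro r s
      ext u
      change (dirFun hU v (r * s)).1 u
        = r.1 u * (dirFun hU v s).1 u + s.1 u * (dirFun hU v r).1 u
      rw [dirFun_apply hU v (r * s) (lift r * lift s)
        (fun u => congrArg₂ (· * ·) (lift_apply r u) (lift_apply s u))]
      rw [fderiv_mul (differentiableAt hU (lift_smooth r) u.2)
        (differentiableAt hU (lift_smooth s) u.2), lift_apply r, lift_apply s]
      rfl)

theorem dir_apply (hU : IsOpen U) (v : ℝ × ℝ) (r : SmoothRing U) (f : ℝ × ℝ → ℝ)
    (hr : ∀ u : U, r.1 u = f u) (u : U) : (dir hU v r).1 u = fderiv ℝ f u v :=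
  dirFun_apply hU v r f hr u

theorem dir_comm (hU : IsOpen U) (v w : ℝ × ℝ) (r : SmoothRing U) :
    dir hU v (dir hU w r) = dir hU w (dir hU v r) := by
  have key : ∀ v w : ℝ × ℝ, ∀ u : U, (dir hU v (dir hU w r)).1 u
      = fderiv ℝ (fderiv ℝ (lift r)) u v w := by
    intro v w u
    rw [dir_apply hU v _ (fun p => fderiv ℝ (lift r) p w) (fun _ => rfl)]
    have hd : DifferentiableAt ℝ (fderiv ℝ (lift r)) (u : ℝ × ℝ) :=
      (((lift_smooth r).fderiv_of_isOpen hU (m := 1) (by norm_num; exact two_le_top)).contDiffAt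
        (hU.mem_nhds u.2)).differentiableAt (by simp)
    rw [fderiv_clm_apply hd (differentiableAt_const w)]
    simp
  ext u
  rw [key, key]
  exact (((lift_smooth r).contDiffAt (hU.mem_nhds u.2)).isSymmSndFDerivAt
    (by simp only [minSmoothness_of_isRCLikeNormedField]; exact two_le_top)) v w

/-! ### Functions on the plane and their restrictions -/

/-- The curried function `f` is smooth on `U` and restricts to `r` there. -/
def Rep (f : ℝ → ℝ → ℝ) (r : SmoothRing U) : Prop :=
  SmoothOn2 f U ∧ ∀ u : U, r.1 u = f u.1.1 u.1.2

theorem exists_rep {f : ℝ → ℝ → ℝ} (hf : SmoothOn2 f U) : ∃ r : SmoothRing U, Rep f r :=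
  ⟨⟨fun u => f u.1.1 u.1.2, Function.uncurry f, hf, fun _ => rfl⟩, hf, fun _ => rfl⟩

namespace Rep

variable {f g : ℝ → ℝ → ℝ} {r s : SmoothRing U}

theorem add (hf : Rep f r) (hg : Rep g s) : Rep (fun x y => f x y + g x y) (r + s) :=
  ⟨ContDiffOn.add hf.1 hg.1, fun u => by simp [hf.2, hg.2]⟩

theorem sub (hf : Rep f r) (hg : Rep g s) : Rep (fun x y => f x y - g x y) (r - s) :=
  ⟨ContDiffOn.sub hf.1 hg.1, fun u => by simp [hf.2, hg.2]⟩

theorem mul (hf : Rep f r) (hg : Rep g s) : Rep (fun x y => f x y * g x y) (r * s) :=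
  ⟨ContDiffOn.mul hf.1 hg.1, fun u => by simp [hf.2, hg.2]⟩

theorem sq (hf : Rep f r) : Rep (fun x y => f x y ^ 2) (r ^ 2) :=
  ⟨ContDiffOn.pow hf.1 2, fun u => by simp [hf.2]⟩

theorem two : Rep (fun _ _ => 2) (2 : SmoothRing U) := ⟨contDiffOn_const, fun _ => rfl⟩

theorem three : Rep (fun _ _ => 3) (3 : SmoothRing U) := ⟨contDiffOn_const, fun _ => rfl⟩

theorem neg_two : Rep (fun _ _ => -2) (-2 : SmoothRing U) := ⟨contDiffOn_const, fun _ => rfl⟩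

theorem px_eq {p : ℝ × ℝ} (h : DifferentiableAt ℝ (Function.uncurry f) p) :
    px f p.1 p.2 = fderiv ℝ (Function.uncurry f) p (1, 0) :=
  (HasFDerivAt.comp_hasDerivAt (f := fun s => (s, p.2)) p.1 h.hasFDerivAt
    ((hasDerivAt_id p.1).prodMk (hasDerivAt_const p.1 p.2))).deriv

theorem py_eq {p : ℝ × ℝ} (h : DifferentiableAt ℝ (Function.uncurry f) p) :
    py f p.1 p.2 = fderiv ℝ (Function.uncurry f) p (0, 1) :=
  (HasFDerivAt.comp_hasDerivAt (f := fun s => (p.1, s)) p.2 h.hasFDerivAt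
    ((hasDerivAt_const p.2 p.1).prodMk (hasDerivAt_id p.2))).deriv

theorem px (hU : IsOpen U) (hf : Rep f r) :
    Rep (fun x y => _root_.px f x y) (dir hU (1, 0) r) :=
  ⟨(contDiffOn_fderiv_apply hU hf.1 (1, 0)).congr
      fun _ hp => px_eq (differentiableAt hU hf.1 hp),
    fun u => by
      rw [dir_apply hU _ r (Function.uncurry f) hf.2]
      exact (px_eq (differentiableAt hU hf.1 u.2)).symm⟩

theorem py (hU : IsOpen U) (hf : Rep f r) :
    Rep (fun x y => _root_.py f x y) (dir hU (0, 1) r) :=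
  ⟨(contDiffOn_fderiv_apply hU hf.1 (0, 1)).congr
      fun _ hp => py_eq (differentiableAt hU hf.1 hp),
    fun u => by
      rw [dir_apply hU _ r (Function.uncurry f) hf.2]
      exact (py_eq (differentiableAt hU hf.1 u.2)).symm⟩

theorem eq_zero (hf : Rep f r) (h : ∀ p ∈ U, f p.1 p.2 = 0) : r = 0 := by
  ext u
  rw [hf.2, h u.1 u.2]
  rfl

theorem fderiv_eq_zero (hU : IsOpen U) (hf : Rep f r) {v : ℝ × ℝ} (h : dir hU v r = 0)
    {p : ℝ × ℝ} (hp : p ∈ U) : fderiv ℝ (Function.uncurry f) p v = 0 := by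
  rw [← dir_apply hU v r (Function.uncurry f) hf.2 ⟨p, hp⟩, h]
  rfl

end Rep

section Connection

variable {A B C D : ℝ → ℝ → ℝ} {a b c q : SmoothRing U}

theorem rep_Kmap (hU : IsOpen U) (ha : Rep A a) (hb : Rep B b) (hc : Rep C c) (hq : Rep D q) :
    Rep (Kmap A B C D) (DiffRing.moment (dir hU (1, 0)) (dir hU (0, 1)) a b c q) := by
  unfold Kmap DiffRing.moment
  repeat' first
    | assumption
    | exact Rep.two
    | exact Rep.three
    | exact Rep.neg_two
    | apply Rep.add
    | apply Rep.sub
    | apply Rep.mul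
    | apply Rep.sq
    | apply Rep.px
    | apply Rep.py

theorem rep_rho1 (hU : IsOpen U) (ha : Rep A a) (hb : Rep B b) (hc : Rep C c) (hq : Rep D q) :
    Rep (rho1 A B C D) (DiffRing.rho1 (dir hU (1, 0)) (dir hU (0, 1)) a b c q) := by
  unfold rho1 DiffRing.rho1
  repeat' first
    | assumption
    | exact Rep.two
    | exact Rep.three
    | exact Rep.neg_two
    | apply Rep.add
    | apply Rep.sub
    | apply Rep.mul
    | apply Rep.sq
    | apply Rep.px
    | apply Rep.py

theorem rep_rho2 (hU : IsOpen U) (ha : Rep A a) (hb : Rep B b) (hc : Rep C c) (hq : Rep D q) :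
    Rep (rho2 A B C D) (DiffRing.rho2 (dir hU (1, 0)) (dir hU (0, 1)) a b c q) := by
  unfold rho2 DiffRing.rho2
  repeat' first
    | assumption
    | exact Rep.two
    | exact Rep.three
    | exact Rep.neg_two
    | apply Rep.add
    | apply Rep.sub
    | apply Rep.mul
    | apply Rep.sq
    | apply Rep.px
    | apply Rep.py

/-- Criticality on `U`, expressed in the ring of smooth functions on `U`. -/
theorem crit_eq_zero (hU : IsOpen U) (ha : Rep A a) (hb : Rep B b) (hc : Rep C c)
    (hq : Rep D q) (hcrit : Critical A B C D U) :
    let d := dir hU (1, 0)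
    let e := dir hU (0, 1)
    let k := DiffRing.moment d e a b c q
    DiffRing.crit1 d e a b k = 0 ∧ DiffRing.crit2 d e c q k = 0 ∧
      DiffRing.crit3 d e a b q k = 0 ∧ DiffRing.crit4 d e a c q k = 0 := by
  intro d e k
  have hK : Rep (Kmap A B C D) k := rep_Kmap hU ha hb hc hq
  unfold Critical at hcrit
  generalize Kmap A B C D = K at hK hcrit
  refine ⟨Rep.eq_zero (f := E1 A B C D K) ?_ fun p hp => (hcrit p hp).1,
    Rep.eq_zero (f := E2 A B C D K) ?_ fun p hp => (hcrit p hp).2.1,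
    Rep.eq_zero (f := E3 A B C D K) ?_ fun p hp => (hcrit p hp).2.2.1,
    Rep.eq_zero (f := E4 A B C D K) ?_ fun p hp => (hcrit p hp).2.2.2⟩
  all_goals
    clear_value k
    first
      | unfold E1 DiffRing.crit1
      | unfold E2 DiffRing.crit2
      | unfold E3 DiffRing.crit3
      | unfold E4 DiffRing.crit4
  repeat' first
    | assumption
    | exact Rep.two
    | exact Rep.three
    | exact Rep.neg_two
    | apply Rep.add
    | apply Rep.sub
    | apply Rep.mul
    | apply Rep.sq
    | apply Rep.px
    | apply Rep.py

end Connection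

end SmoothRing

open SmoothRing in
/-- for a critical symplectic connection on a connected open set,
K² + ρ(H_K) = K² + K_x·ρ₂ − K_y·ρ₁ is constant. -/
theorem stmt3 (U : Set (ℝ × ℝ)) (hU : IsOpen U) (hconn : IsConnected U)
    (A B C D : ℝ → ℝ → ℝ)
    (hA : SmoothOn2 A U) (hB : SmoothOn2 B U) (hC : SmoothOn2 C U)
    (hD : SmoothOn2 D U) (hcrit : Critical A B C D U) :
    ∃ c : ℝ, ∀ p ∈ U,
      Kmap A B C D p.1 p.2 ^ 2
        + px (Kmap A B C D) p.1 p.2 * rho2 A B C D p.1 p.2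
        - py (Kmap A B C D) p.1 p.2 * rho1 A B C D p.1 p.2 = c := by
  obtain ⟨a, ha⟩ := exists_rep hA
  obtain ⟨b, hb⟩ := exists_rep hB
  obtain ⟨c, hc⟩ := exists_rep hC
  obtain ⟨q, hq⟩ := exists_rep hD
  have hK := rep_Kmap hU ha hb hc hq
  obtain ⟨h1, h2, h3, h4⟩ := crit_eq_zero hU ha hb hc hq hcrit
  have hF := ((hK.sq).add ((hK.px hU).mul (rep_rho2 hU ha hb hc hq))).sub
    ((hK.py hU).mul (rep_rho1 hU ha hb hc hq))
  have hcomm := dir_comm hU (1, 0) (0, 1)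
  have hx := DiffRing.criticality_dx _ _ hcomm a b c q _ rfl h1 h2 h3 h4
  have hy := DiffRing.criticality_dy _ _ hcomm a b c q _ rfl h1 h2 h3 h4
  refine (hU.exists_is_const_of_fderiv_eq_zero hconn.isPreconnected
    (hF.1.differentiableOn (by simp)) fun p hp => ?_)
  ext
  · exact hF.fderiv_eq_zero hU hx hp
  · exact hF.fderiv_eq_zero hU hy hp
end
end

section
/- Let a ∈ ℝ and let A, B, C, D be smooth functions on ℝ² depending on x alone (A_y = B_y = C_y = D_y ≡ 0) which satisfy the two ordinary differential equations (C_x + 3(AC − D²))_{xx} = x + a and D_{xx} = (AD − BC)_x + 2A·D_x − D·A_x − B·C_x. Then the associated symplectic connection ∇ = ∂ + Π satisfies K(x,y) = x + a, ρ₁ = 0, and E₁(K) = E₂(K) = E₃(K) = E₄(K) = 0; in particular ∇ is a critical symplectic connection whose moment map is not constant. -/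
/-!
Vanishing `y`-derivatives turn `A, B, C, D` into smooth functions of `x` alone
(`exists_of_py_eq_zero`), so every term of `K` containing a `y`-derivative drops out and
`K = C_xxx + 3 (AC − D²)_xx`. By smoothness this equals `(C_x + 3 (AC − D²))_xx`, which is `x + a`
by the first equation; likewise `ρ₁` reduces to the difference of the two sides of the second one.
For `k = x + a` all second derivatives and `k_y` vanish, and `k_x = 1` is only ever multiplied by
`y`-derivatives of the coefficients, so all four components of the criticality operator are zero.
-/

set_option linter.unusedVariables false

noncomputable section

/-- A smooth function with vanishing `y`-derivative is a smooth function of `x` alone. -/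
lemma exists_of_py_eq_zero {f : ℝ → ℝ → ℝ} (hf : Smooth2 f) (h : ∀ x y : ℝ, py f x y = 0) :
    ∃ g : ℝ → ℝ, ContDiff ℝ (⊤ : ℕ∞) g ∧ f = fun x _ => g x := by
  unfold Smooth2 at hf
  refine ⟨fun x => f x 0, hf.comp (contDiff_id.prodMk contDiff_const), ?_⟩
  funext x y
  have hd : Differentiable ℝ (fun s => f x s) :=
    (hf.comp (contDiff_const.prodMk contDiff_id)).differentiable (by simp)
  exact is_const_of_deriv_eq_zero hd (h x) y 0

lemma px_of_x (g : ℝ → ℝ) : px (fun x _ => g x) = fun x _ => deriv g x := rfl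

lemma py_of_x (g : ℝ → ℝ) : py (fun x _ => g x) = fun _ _ => 0 := by
  funext x y
  simp [py]

/-- if A, B, C, D depend on x alone and satisfy the two ODEs
(C_x + 3(AC − D²))_{xx} = x + a and D_{xx} = (AD − BC)_x + 2A·D_x − D·A_x − B·C_x,
then the associated symplectic connection has K = x + a, ρ₁ = 0, and is critical;
in particular its moment map is not constant. -/
theorem stmt5 (a : ℝ) (A B C D : ℝ → ℝ → ℝ)
    (hA : Smooth2 A) (hB : Smooth2 B) (hC : Smooth2 C) (hD : Smooth2 D)
    (hAy : ∀ x y : ℝ, py A x y = 0) (hBy : ∀ x y : ℝ, py B x y = 0)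
    (hCy : ∀ x y : ℝ, py C x y = 0) (hDy : ∀ x y : ℝ, py D x y = 0)
    (hODE1 : ∀ x y : ℝ,
      px (px (fun x' y' => px C x' y'
        + 3 * (A x' y' * C x' y' - D x' y' ^ 2))) x y = x + a)
    (hODE2 : ∀ x y : ℝ,
      px (px D) x y
        = px (fun x' y' => A x' y' * D x' y' - B x' y' * C x' y') x y
          + 2 * A x y * px D x y - D x y * px A x y - B x y * px C x y) :
    (∀ x y : ℝ, Kmap A B C D x y = x + a) ∧
    (∀ x y : ℝ, rho1 A B C D x y = 0) ∧
    Critical A B C D Set.univ ∧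
    ¬ ∃ c : ℝ, ∀ x y : ℝ, Kmap A B C D x y = c := by
  obtain ⟨α, hα, rfl⟩ := exists_of_py_eq_zero hA hAy
  obtain ⟨β, hβ, rfl⟩ := exists_of_py_eq_zero hB hBy
  obtain ⟨γ, hγ, rfl⟩ := exists_of_py_eq_zero hC hCy
  obtain ⟨δ, hδ, rfl⟩ := exists_of_py_eq_zero hD hDy
  have hzx : px (fun _ _ => 0) = fun _ _ => 0 := by
    funext x y
    simp [px]
  -- The quadratic term `AC − D²` as a one-variable function; smoothness makes `deriv` additive.
  have hq : ContDiff ℝ (⊤ : ℕ∞) (fun x => α x * γ x - δ x ^ 2) := (hα.mul hγ).sub (hδ.pow 2)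
  generalize hqdef : (fun x => α x * γ x - δ x ^ 2) = q at hq
  have hq' : ∀ x, α x * γ x - δ x ^ 2 = q x := fun x => congrFun hqdef x
  have hγ₁ : ContDiff ℝ (⊤ : ℕ∞) (deriv γ) := (contDiff_infty_iff_deriv.1 hγ).2
  have hγ₂ : ContDiff ℝ (⊤ : ℕ∞) (deriv (deriv γ)) := (contDiff_infty_iff_deriv.1 hγ₁).2
  have hq₁ : ContDiff ℝ (⊤ : ℕ∞) (deriv q) := (contDiff_infty_iff_deriv.1 hq).2
  have hone : deriv (fun x => deriv γ x + 3 * q x) = fun x => deriv (deriv γ) x + 3 * deriv q x := by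
    funext x
    rw [deriv_fun_add (hγ₁.differentiable (by simp) x)
      ((hq.differentiable (by simp) x).const_mul 3), deriv_const_mul_field]
  have htwo : ∀ x, deriv (fun x => deriv (deriv γ) x + 3 * deriv q x) x
      = deriv (deriv (deriv γ)) x + 3 * deriv (deriv q) x := by
    intro x
    rw [deriv_fun_add (hγ₂.differentiable (by simp) x)
      ((hq₁.differentiable (by simp) x).const_mul 3), deriv_const_mul_field]
  have hK : ∀ x y : ℝ, Kmap (fun x _ => α x) (fun x _ => β x) (fun x _ => γ x)
      (fun x _ => δ x) x y = x + a := by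
    intro x y
    have h := hODE1 x y
    simp only [hq', px_of_x, hone, htwo] at h
    simp only [Kmap, hq', px_of_x, py_of_x (fun x => β x * δ x - α x ^ 2),
      py_of_x (fun _ => 0), py_of_x]
    linarith
  refine ⟨hK, ?_, ?_, ?_⟩
  · intro x y
    have h := hODE2 x y
    simp only [px_of_x] at h
    simp only [rho1, px_of_x, py_of_x (fun x => α x ^ 2 - β x * δ x), py_of_x (fun _ => 0),
      py_of_x]
    linarith
  · have hKf : Kmap (fun x _ => α x) (fun x _ => β x) (fun x _ => γ x) (fun x _ => δ x)
        = fun x _ => x + a := by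
      funext x y
      exact hK x y
    have hx : px (fun x _ => x + a) = fun _ _ => 1 := by
      funext x y
      simp [px]
    have hxx : px (fun _ _ => 1) = fun _ _ => 0 := by
      funext x y
      simp [px]
    have hy : py (fun x _ => x + a) = fun _ _ => 0 := py_of_x _
    have hyx : py (fun _ _ => 1) = fun _ _ => 0 := py_of_x (fun _ => 1)
    have hz : py (fun _ _ => 0) = fun _ _ => 0 := py_of_x (fun _ => 0)
    intro p _
    rw [hKf]
    simp [E1, E2, E3, E4, hx, hxx, hzx, hy, hyx, hz, py_of_x]
  · rintro ⟨c, hc⟩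
    have h0 := (hK 0 0).symm.trans (hc 0 0)
    have h1 := (hK 1 0).symm.trans (hc 1 0)
    linarith
end
end

section
/- Fix a, p, q, τ ∈ ℝ and let U be a connected component of {(x,y) ∈ ℝ² : (x+a)² ≠ τ}. On U take B = D = 0, A(x,y) = (x+a)/(τ − (x+a)²), and C(x,y) = −(1/6)(τ − (x+a)²)((x+a)² + p(x+a) + q). Then the symplectic connection ∇ = ∂ + Π satisfies K(x,y) = x + a and E₁(K) = E₂(K) = E₃(K) = E₄(K) = 0 on U (so ∇ is critical symplectic and not moment constant); moreover ∇ is preferred if and only if q = τ. -/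
/-!
All four coefficient functions depend on `x` only, so every `y`-derivative vanishes and the claim
becomes one about functions of one variable. Put `u = x + a`, `s = τ - u²` and
`Q = u² + p u + q`, so that `A = u / s`, `C = -s Q / 6` and, away from `s = 0`, `A C = -u Q / 6`
is a polynomial. Then `K = C''' + 3 (A C)'' = (4 u + p) - (3 u + p) = u`, which is affine in `x`,
so `E₁, …, E₄` vanish at `K`.

For the Ricci tensor, `R₁₁ = A' - 2 A² = 1 / s`, `R₁₂ = 0` and `R₂₂ = C' + 2 A C = -s Q' / 6`. Hence
`(∇_x Ric)_{xx} = 0`, and the only component of the symmetrized `∇ Ric` that is not automatically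
zero is `4 A R₂₂ - 2 C R₁₁ + R₂₂' = (q - τ) / 3`.

The denominators vanish where `u² = τ`, so the identities between functions hold as germs (`=ᶠ[𝓝 x]`)
at points with `u² ≠ τ`, which is what differentiating them requires.
-/

set_option linter.unusedVariables false

noncomputable section

/-- The function A of the Bourgeois–Cahen-type example. -/
def A6 (a τ : ℝ) : ℝ → ℝ → ℝ := fun x _ => (x + a) / (τ - (x + a) ^ 2)

/-- The function C of the Bourgeois–Cahen-type example. -/
def C6 (a p q τ : ℝ) : ℝ → ℝ → ℝ := fun x _ =>
  -(1 / 6) * (τ - (x + a) ^ 2) * ((x + a) ^ 2 + p * (x + a) + q)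

/-- The zero function of two variables. -/
def Z2 : ℝ → ℝ → ℝ := fun _ _ => 0

open Filter Topology

/-- The profile `x ↦ A(x, ·)`. -/
def aFun (a τ : ℝ) : ℝ → ℝ := fun x => (x + a) / (τ - (x + a) ^ 2)

/-- The profile `x ↦ C(x, ·)`. -/
def cFun (a p q τ : ℝ) : ℝ → ℝ := fun x =>
  -(1 / 6) * (τ - (x + a) ^ 2) * ((x + a) ^ 2 + p * (x + a) + q)

/-- The moment map as a function of `x` alone: the third derivative of `C` plus three times the
second derivative of `A C`. -/
def kFun (a p q τ : ℝ) : ℝ → ℝ := fun x =>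
  deriv (deriv (deriv (cFun a p q τ))) x
    + 3 * deriv (deriv (fun s => aFun a τ s * cFun a p q τ s)) x

/-! ### Reduction to one variable -/

lemma px_lift (f : ℝ → ℝ) : px (fun x _ => f x) = fun x _ => deriv f x := rfl

lemma py_lift (f : ℝ → ℝ) : py (fun x _ => f x) = fun _ _ => 0 := by
  funext x y; simp [py]

lemma Z2_eq : Z2 = fun _ _ => 0 := rfl

lemma px_zero : px (fun _ _ => 0) = fun _ _ => 0 := by
  funext x y; simp [px]

lemma Kmap_eq (a p q τ : ℝ) :
    Kmap (A6 a τ) Z2 (C6 a p q τ) Z2 = fun x _ => kFun a p q τ x := by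
  have hA : A6 a τ = fun x _ => aFun a τ x := rfl
  have hC : C6 a p q τ = fun x _ => cFun a p q τ x := rfl
  have hsq := py_lift (fun x => -(aFun a τ x) ^ 2)
  funext x y
  simp [Kmap, hA, hC, Z2_eq, px_lift, py_lift, kFun, hsq]

lemma eventually_ne {a τ x : ℝ} (hx : (x + a) ^ 2 ≠ τ) : ∀ᶠ t in 𝓝 x, (t + a) ^ 2 ≠ τ :=
  (by fun_prop : Continuous fun t : ℝ => (t + a) ^ 2).continuousAt.eventually_ne hx

lemma hasDerivAt_shift_pow (a : ℝ) (n : ℕ) (x : ℝ) :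
    HasDerivAt (fun t : ℝ => (t + a) ^ n) (n * (x + a) ^ (n - 1)) x := by
  simpa using ((hasDerivAt_id x).add_const a).fun_pow n

/-- Differentiation of quartics in `x + a`. The derivative keeps the shape of a quartic, so that
the lemma can be iterated. -/
lemma deriv_quartic (a c₀ c₁ c₂ c₃ c₄ : ℝ) :
    deriv (fun t : ℝ => c₀ + c₁ * (t + a) + c₂ * (t + a) ^ 2 + c₃ * (t + a) ^ 3
      + c₄ * (t + a) ^ 4) =
    fun t => c₁ + 2 * c₂ * (t + a) + 3 * c₃ * (t + a) ^ 2 + 4 * c₄ * (t + a) ^ 3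
      + 0 * (t + a) ^ 4 := by
  funext x
  have h := (((((hasDerivAt_id x).add_const a).const_mul c₁).const_add c₀).add
    ((hasDerivAt_shift_pow a 2 x).const_mul c₂)).add
    ((hasDerivAt_shift_pow a 3 x).const_mul c₃) |>.add
    ((hasDerivAt_shift_pow a 4 x).const_mul c₄)
  refine HasDerivAt.deriv (h.congr_deriv ?_)
  norm_num
  ring

/-! ### The moment map -/

lemma cFun_eq (a p q τ : ℝ) : cFun a p q τ = fun t =>
    (-(τ * q) / 6) + (-(τ * p) / 6) * (t + a) + ((q - τ) / 6) * (t + a) ^ 2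
      + (p / 6) * (t + a) ^ 3 + (1 / 6) * (t + a) ^ 4 := by
  funext t; simp only [cFun]; ring

lemma ac_eq {a p q τ x : ℝ} (hx : (x + a) ^ 2 ≠ τ) :
    aFun a τ x * cFun a p q τ x =
      0 + (-q / 6) * (x + a) + (-p / 6) * (x + a) ^ 2 + (-1 / 6) * (x + a) ^ 3
        + 0 * (x + a) ^ 4 := by
  have hs : τ - (x + a) ^ 2 ≠ 0 := sub_ne_zero.mpr hx.symm
  simp only [aFun, cFun]
  field_simp
  ring

lemma kFun_eq {a p q τ x : ℝ} (hx : (x + a) ^ 2 ≠ τ) : kFun a p q τ x = x + a := by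
  have hac : (fun s => aFun a τ s * cFun a p q τ s) =ᶠ[𝓝 x] fun t =>
      0 + (-q / 6) * (t + a) + (-p / 6) * (t + a) ^ 2 + (-1 / 6) * (t + a) ^ 3
        + 0 * (t + a) ^ 4 :=
    (eventually_ne hx).mono fun t ht => ac_eq ht
  rw [kFun, hac.deriv.deriv_eq, cFun_eq]
  simp only [deriv_quartic]
  ring

lemma kFun_germ {a p q τ x : ℝ} (hx : (x + a) ^ 2 ≠ τ) :
    kFun a p q τ =ᶠ[𝓝 x] fun t => t + a :=
  (eventually_ne hx).mono fun _ ht => kFun_eq ht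

lemma deriv2_kFun {a p q τ x : ℝ} (hx : (x + a) ^ 2 ≠ τ) :
    deriv (deriv (kFun a p q τ)) x = 0 := by
  rw [(kFun_germ hx).deriv.deriv_eq]
  simp

lemma deriv3_kFun {a p q τ x : ℝ} (hx : (x + a) ^ 2 ≠ τ) :
    deriv (deriv (deriv (kFun a p q τ))) x = 0 := by
  rw [(kFun_germ hx).deriv.deriv.deriv_eq]
  simp

/-! ### The Ricci tensor and its covariant derivative -/

lemma hasDerivAt_denom (a τ x : ℝ) :
    HasDerivAt (fun t : ℝ => τ - (t + a) ^ 2) (-(2 * (x + a))) x := by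
  simpa using (hasDerivAt_shift_pow a 2 x).const_sub τ

lemma deriv_aFun {a τ x : ℝ} (hx : (x + a) ^ 2 ≠ τ) :
    deriv (aFun a τ) x = 1 / (τ - (x + a) ^ 2) + 2 * aFun a τ x ^ 2 := by
  have hs : τ - (x + a) ^ 2 ≠ 0 := sub_ne_zero.mpr hx.symm
  have h := ((hasDerivAt_id x).add_const a).fun_div (hasDerivAt_denom a τ x) hs
  refine HasDerivAt.deriv (h.congr_deriv ?_)
  simp only [aFun, id]
  field_simp
  ring

lemma R11_eq (a p q τ : ℝ) : R11 (A6 a τ) Z2 (C6 a p q τ) Z2 =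
    fun x _ => deriv (aFun a τ) x - 2 * aFun a τ x ^ 2 := by
  have hA : A6 a τ = fun x _ => aFun a τ x := rfl
  funext x y
  simp only [R11, hA, Z2_eq, px_lift, py_lift]
  ring

lemma R22_eq (a p q τ : ℝ) : R22 (A6 a τ) Z2 (C6 a p q τ) Z2 =
    fun x _ => deriv (cFun a p q τ) x + 2 * (aFun a τ x * cFun a p q τ x) := by
  have hA : A6 a τ = fun x _ => aFun a τ x := rfl
  have hC : C6 a p q τ = fun x _ => cFun a p q τ x := rfl
  funext x y
  simp only [R22, hA, hC, Z2_eq, px_lift, py_lift]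
  ring

lemma R12_eq (a p q τ : ℝ) : R12 (A6 a τ) Z2 (C6 a p q τ) Z2 = fun _ _ => 0 := by
  have hA : A6 a τ = fun x _ => aFun a τ x := rfl
  funext x y
  simp [R12, hA, Z2_eq, px_zero, py_lift]

lemma r11_eq {a τ x : ℝ} (hx : (x + a) ^ 2 ≠ τ) :
    deriv (aFun a τ) x - 2 * aFun a τ x ^ 2 = (τ - (x + a) ^ 2)⁻¹ := by
  rw [deriv_aFun hx]; ring

lemma deriv_r11 {a τ x : ℝ} (hx : (x + a) ^ 2 ≠ τ) :
    deriv (fun t => deriv (aFun a τ) t - 2 * aFun a τ t ^ 2) x =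
      2 * (x + a) / (τ - (x + a) ^ 2) ^ 2 := by
  have hs : τ - (x + a) ^ 2 ≠ 0 := sub_ne_zero.mpr hx.symm
  have hg : (fun t => deriv (aFun a τ) t - 2 * aFun a τ t ^ 2) =ᶠ[𝓝 x]
      fun t => (τ - (t + a) ^ 2)⁻¹ := (eventually_ne hx).mono fun t ht => r11_eq ht
  rw [hg.deriv_eq]
  refine HasDerivAt.deriv (((hasDerivAt_denom a τ x).fun_inv hs).congr_deriv ?_)
  ring

/-- `R₂₂ = -(τ - u²) (2 u + p) / 6`, expanded in powers of `u = x + a`. -/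
lemma r22_eq {a p q τ x : ℝ} (hx : (x + a) ^ 2 ≠ τ) :
    deriv (cFun a p q τ) x + 2 * (aFun a τ x * cFun a p q τ x) =
      (-(τ * p) / 6) + (-τ / 3) * (x + a) + (p / 6) * (x + a) ^ 2 + (1 / 3) * (x + a) ^ 3
        + 0 * (x + a) ^ 4 := by
  rw [ac_eq hx, cFun_eq, deriv_quartic]; ring

lemma deriv_r22 {a p q τ x : ℝ} (hx : (x + a) ^ 2 ≠ τ) :
    deriv (fun t => deriv (cFun a p q τ) t + 2 * (aFun a τ t * cFun a p q τ t)) x =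
      -τ / 3 + (p / 3) * (x + a) + (x + a) ^ 2 := by
  have hg : (fun t => deriv (cFun a p q τ) t + 2 * (aFun a τ t * cFun a p q τ t)) =ᶠ[𝓝 x] _ :=
    (eventually_ne hx).mono fun t ht => r22_eq ht
  rw [hg.deriv_eq, deriv_quartic]; ring

lemma nxRxx_eq {a p q τ x : ℝ} (y : ℝ) (hx : (x + a) ^ 2 ≠ τ) :
    nxRxx (A6 a τ) Z2 (C6 a p q τ) Z2 x y = 0 := by
  have hs : τ - (x + a) ^ 2 ≠ 0 := sub_ne_zero.mpr hx.symm
  simp only [nxRxx, R11_eq, R12_eq, px_lift, deriv_r11 hx, r11_eq hx, A6, Z2]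
  field_simp
  ring

/-- The one component of the symmetrized `∇ Ric` that detects `q ≠ τ`. -/
lemma mixed_eq {a p q τ x : ℝ} (y : ℝ) (hx : (x + a) ^ 2 ≠ τ) :
    2 * nyRxy (A6 a τ) Z2 (C6 a p q τ) Z2 x y + nxRyy (A6 a τ) Z2 (C6 a p q τ) Z2 x y
      = (q - τ) / 3 := by
  have hs : τ - (x + a) ^ 2 ≠ 0 := sub_ne_zero.mpr hx.symm
  simp only [nyRxy, nxRyy, R11_eq, R12_eq, R22_eq, px_lift, py_lift, deriv_r22 hx, r11_eq hx,
    r22_eq hx, A6, C6, Z2]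
  field_simp
  ring

/-- on a connected component U of {(x+a)² ≠ τ}, the connection with
B = D = 0, A = (x+a)/(τ−(x+a)²), C = −(1/6)(τ−(x+a)²)((x+a)² + p(x+a) + q) satisfies
K = x + a and is critical symplectic (hence not moment constant); it is preferred
iff q = τ. -/
theorem stmt6 (a p q τ : ℝ) (z : ℝ × ℝ) (hz : (z.1 + a) ^ 2 ≠ τ)
    (U : Set (ℝ × ℝ))
    (hU : U = connectedComponentIn {w : ℝ × ℝ | (w.1 + a) ^ 2 ≠ τ} z) :
    (∀ w ∈ U, Kmap (A6 a τ) Z2 (C6 a p q τ) Z2 w.1 w.2 = w.1 + a) ∧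
    Critical (A6 a τ) Z2 (C6 a p q τ) Z2 U ∧
    (¬ ∃ c : ℝ, ∀ w ∈ U, Kmap (A6 a τ) Z2 (C6 a p q τ) Z2 w.1 w.2 = c) ∧
    (Preferred (A6 a τ) Z2 (C6 a p q τ) Z2 U ↔ q = τ) := by
  have hopen : IsOpen {w : ℝ × ℝ | (w.1 + a) ^ 2 ≠ τ} :=
    isOpen_ne_fun (by fun_prop) continuous_const
  have hsub : ∀ w ∈ U, (w.1 + a) ^ 2 ≠ τ := fun w hw =>
    connectedComponentIn_subset _ _ (hU ▸ hw)
  have hzU : z ∈ U := hU ▸ mem_connectedComponentIn hz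
  have hUo : IsOpen U := hU ▸ hopen.connectedComponentIn
  have hK : ∀ w ∈ U, Kmap (A6 a τ) Z2 (C6 a p q τ) Z2 w.1 w.2 = w.1 + a := fun w hw => by
    rw [Kmap_eq]; exact kFun_eq (hsub w hw)
  refine ⟨hK, ?_, ?_, ?_, ?_⟩
  · intro w hw
    have h2 := deriv2_kFun (p := p) (q := q) (hsub w hw)
    have h3 := deriv3_kFun (p := p) (q := q) (hsub w hw)
    have hA : A6 a τ = fun x _ => aFun a τ x := rfl
    have hC : C6 a p q τ = fun x _ => cFun a p q τ x := rfl
    rw [Kmap_eq]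
    refine ⟨?_, ?_, ?_, ?_⟩ <;>
      simp [E1, E2, E3, E4, hA, hC, Z2_eq, px_lift, py_lift, h2, h3]
  · -- `U` is open, so it contains a point `(t, z.2)` with `t > z.1`, where `K` is different.
    rintro ⟨c, hc⟩
    have hev : ∀ᶠ t in 𝓝 z.1, (t, z.2) ∈ U :=
      (by fun_prop : Continuous fun t : ℝ => (t, z.2)).continuousAt.eventually_mem
        (hUo.mem_nhds hzU)
    obtain ⟨t, htU, ht⟩ := ((hev.filter_mono nhdsWithin_le_nhds).and
      (self_mem_nhdsWithin : Set.Ioi z.1 ∈ 𝓝[>] z.1)).exists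
    have e1 := (hK _ htU).symm.trans (hc _ htU)
    have e2 := (hK _ hzU).symm.trans (hc _ hzU)
    have hlt : z.1 < t := ht
    simp only at e1
    linarith
  · intro h
    have := (h z hzU).2.2.1
    rw [mixed_eq _ (hsub z hzU)] at this
    linarith
  · intro h w hw
    refine ⟨nxRxx_eq _ (hsub w hw), ?_, ?_, ?_⟩
    · have h0 := py_lift fun x => deriv (aFun a τ) x - 2 * aFun a τ x ^ 2
      simp [nxRxy, nyRxx, R11_eq, R12_eq, h0, px_zero, Z2]
    · rw [mixed_eq _ (hsub w hw), h]; simp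
    · have h0 := py_lift fun x => deriv (cFun a p q τ) x + 2 * (aFun a τ x * cFun a p q τ x)
      simp [nyRyy, R12_eq, R22_eq, h0, Z2]
end
end

section
/- Fix a, p, q, τ ∈ ℝ with τ < 0, and define α(x) = (x+a)/(τ − (x+a)²) and γ(x) = −(1/6)(τ − (x+a)²)((x+a)² + p(x+a) + q), which are smooth on all of ℝ since τ < 0. Then for every (t₀, x₀, y₀, v₀, w₀) ∈ ℝ⁵ there exist twice continuously differentiable functions x, y : ℝ → ℝ with x(t₀) = x₀, x'(t₀) = v₀, y(t₀) = y₀, y'(t₀) = w₀, satisfying for all t ∈ ℝ the geodesic equations x''(t) + α(x(t))·x'(t)² + γ(x(t))·y'(t)² = 0 and y''(t) − 2α(x(t))·x'(t)·y'(t) = 0. (That is, the critical symplectic connection on ℝ² with B = D = 0, A = α, C = γ is geodesically complete when τ < 0.) -/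
/-!
The connection is complete because a hyperbolic substitution turns its geodesic equations into a
globally Lipschitz system.

Write `τ = -r²` with `r > 0`. The second equation says that `c = (r² + (x + a)²) y'` is constant.
Substituting this into the first one and putting `x + a = r sinh θ`, which is a global
diffeomorphism of the line, the terms quadratic in `x'` cancel and there remains
`θ'' = -(c² / (6 r³)) (r² sinh² θ + p r sinh θ + q) / cosh³ θ`.
The right-hand side is a polynomial in `tanh θ` and `1 / cosh θ`, and so is its derivative; hence
it is globally Lipschitz (`exists_lipschitzWith_force`). A globally Lipschitz `C¹` vector field
has solutions for all time (`exists_global_solution`), so `θ` exists on all of `ℝ`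
(`exists_theta`). Then `x = r sinh θ - a`, and `y` is recovered by integrating
`y' = c / (r² cosh² θ)`.
-/

set_option linter.unusedVariables false

noncomputable section

open Set Metric
open scoped NNReal Manifold

/-- A globally Lipschitz `C¹` vector field on a Banach space is complete: the Picard–Lindelöf
existence time around every point is at least `1 / (K + 1)`, so local solutions extend. -/
lemma exists_global_solution {E : Type*} [NormedAddCommGroup E] [NormedSpace ℝ E]
    [CompleteSpace E] {f : E → E} (hf : ContDiff ℝ 1 f) {K : ℝ≥0} (hK : LipschitzWith K f)
    (t₀ : ℝ) (x : E) :
    ∃ γ : ℝ → E, γ t₀ = x ∧ ∀ t, HasDerivAt γ (f (γ t)) t := by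
  set ε : ℝ := 1 / (K + 1) with hε
  have hε0 : 0 < ε := by positivity
  obtain ⟨γ, h0, hγ⟩ := exists_isMIntegralCurve_of_isMIntegralCurveOn (I := 𝓘(ℝ, E)) (M := E)
    (v := f) (contMDiff_vectorSpace_iff_contDiff.2 hf) hε0 (by
      intro x
      have hpl : IsPicardLindelof (fun _ : ℝ => f) (tmin := -ε) (tmax := ε)
          ⟨0, by constructor <;> linarith⟩ x ‖f x‖₊ 0 (‖f x‖₊ + K * ‖f x‖₊) K := by
        refine ⟨fun _ _ => hK.lipschitzOnWith, fun _ _ => continuousOn_const, ?_, ?_⟩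
        · intro _ _ y hy
          have h1 := hK.dist_le_mul y x
          rw [dist_eq_norm] at h1
          have h2 : (K : ℝ) * dist y x ≤ K * ‖f x‖ :=
            mul_le_mul_of_nonneg_left (by simpa using hy) K.2
          have h3 : ‖f y‖ ≤ ‖f x‖ + ‖f y - f x‖ := by
            simpa using norm_add_le (f x) (f y - f x)
          push_cast
          linarith
        · simp only [sub_zero, zero_sub, neg_neg, max_self]
          push_cast
          rw [hε]
          apply le_of_eq
          have : (K : ℝ) + 1 ≠ 0 := by positivity
          field_simp
          ring
      obtain ⟨γ, h0, hγ⟩ := hpl.exists_eq_forall_mem_Icc_hasDerivWithinAt₀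
      refine ⟨γ, h0, fun t ht => ?_⟩
      have h : HasDerivWithinAt γ (f (γ t)) (Ioo (-ε) ε) t :=
        (hγ t (Ioo_subset_Icc_self ht)).mono Ioo_subset_Icc_self
      exact hasMFDerivWithinAt_iff_hasFDerivWithinAt.2 h.hasFDerivWithinAt) x
  refine ⟨fun t => γ (t - t₀), by simpa using h0, fun t => ?_⟩
  have h : HasDerivAt γ (f (γ (t - t₀))) (t - t₀) :=
    hasDerivAt_iff_hasFDerivAt.2 (hasMFDerivAt_iff_hasFDerivAt.1 (hγ (t - t₀)))
  exact h.comp_sub_const t t₀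

/-- The right-hand side of the equation `θ'' = force k r p q θ` obeyed along a geodesic by `θ`,
where `x + a = r sinh θ`; the constant `k` is `-c² / (6 r³)` with `c` the conserved quantity. -/
def force (k r p q θ : ℝ) : ℝ :=
  k * (r ^ 2 * Real.sinh θ ^ 2 + p * (r * Real.sinh θ) + q) * ((Real.cosh θ)⁻¹) ^ 3

lemma contDiff_force (k r p q : ℝ) : ContDiff ℝ 1 (force k r p q) := by
  unfold force
  have : ContDiff ℝ 1 (fun θ => (Real.cosh θ)⁻¹) :=
    Real.contDiff_cosh.inv fun θ => (Real.cosh_pos θ).ne'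
  have h2 : ContDiff ℝ 1 Real.sinh := Real.contDiff_sinh
  fun_prop

lemma hasDerivAt_force (k r p q θ : ℝ) :
    HasDerivAt (force k r p q)
      (k * (2 * r ^ 2 * Real.sinh θ * Real.cosh θ + p * (r * Real.cosh θ))
          * ((Real.cosh θ)⁻¹) ^ 3
        + k * (r ^ 2 * Real.sinh θ ^ 2 + p * (r * Real.sinh θ) + q)
          * (3 * ((Real.cosh θ)⁻¹) ^ 2 * (-Real.sinh θ / Real.cosh θ ^ 2))) θ := by
  have hS := Real.hasDerivAt_sinh θ
  have hC := (Real.hasDerivAt_cosh θ).fun_inv (Real.cosh_pos θ).ne'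
  have h := (((((hS.fun_pow 2).const_mul (r ^ 2)).fun_add
    ((hS.const_mul r).const_mul p)).add_const q).const_mul k).fun_mul (hC.fun_pow 3)
  refine h.congr_deriv ?_
  push_cast
  ring

/-- The derivative of the force is a polynomial in `tanh θ` and `1 / cosh θ`, hence bounded. -/
lemma exists_lipschitzWith_force (k r p q : ℝ) : ∃ K, LipschitzWith K (force k r p q) := by
  have hb : ∀ θ, ‖deriv (force k r p q) θ‖ ≤
      |k| * (2 * r ^ 2 + |p * r| + 3 * (r ^ 2 + |p * r| + |q|)) := by
    intro θ
    rw [(hasDerivAt_force k r p q θ).deriv]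
    have hC : 0 < Real.cosh θ := Real.cosh_pos θ
    set T := Real.sinh θ / Real.cosh θ with hT
    set W := (Real.cosh θ)⁻¹ with hW
    have hW0 : |W| ≤ 1 := by
      rw [abs_of_pos (inv_pos.2 hC)]
      exact inv_le_one_of_one_le₀ (Real.one_le_cosh θ)
    have hT0 : |T| ≤ 1 := by
      rw [← sq_le_one_iff_abs_le_one, hT, div_pow, div_le_one (by positivity), Real.cosh_sq]
      linarith
    have hpow : ∀ m n : ℕ, |T| ^ m * |W| ^ n ≤ 1 := fun m n =>
      mul_le_one₀ (pow_le_one₀ (abs_nonneg _) hT0) (by positivity)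
        (pow_le_one₀ (abs_nonneg _) hW0)
    have key : k * (2 * r ^ 2 * Real.sinh θ * Real.cosh θ + p * (r * Real.cosh θ)) * W ^ 3
        + k * (r ^ 2 * Real.sinh θ ^ 2 + p * (r * Real.sinh θ) + q)
          * (3 * W ^ 2 * (-Real.sinh θ / Real.cosh θ ^ 2))
        = k * ((2 * r ^ 2 * (T ^ 1 * W ^ 1) + p * r * (T ^ 0 * W ^ 2))
          - 3 * (r ^ 2 * (T ^ 3 * W ^ 1) + p * r * (T ^ 2 * W ^ 2) + q * (T ^ 1 * W ^ 3))) := by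
      rw [hT, hW]
      field_simp
      ring
    have hc : ∀ (c : ℝ) (m n : ℕ), |c * (T ^ m * W ^ n)| ≤ |c| := fun c m n => by
      rw [abs_mul, abs_mul, abs_pow, abs_pow]
      exact mul_le_of_le_one_right (abs_nonneg _) (hpow m n)
    rw [key, Real.norm_eq_abs, abs_mul]
    refine mul_le_mul_of_nonneg_left ?_ (abs_nonneg _)
    have hr : |r ^ 2| = r ^ 2 := abs_of_nonneg (sq_nonneg r)
    have hr' : |2 * r ^ 2| = 2 * r ^ 2 := abs_of_nonneg (by positivity)
    have e1 := abs_le.1 (hc (2 * r ^ 2) 1 1)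
    have e2 := abs_le.1 (hc (p * r) 0 2)
    have e3 := abs_le.1 (hc (r ^ 2) 3 1)
    have e4 := abs_le.1 (hc (p * r) 2 2)
    have e5 := abs_le.1 (hc q 1 3)
    rw [hr'] at e1
    rw [hr] at e3
    rw [abs_le]
    constructor <;> linarith [e1.1, e1.2, e2.1, e2.2, e3.1, e3.2, e4.1, e4.2, e5.1, e5.2]
  refine ⟨Real.toNNReal (|k| * (2 * r ^ 2 + |p * r| + 3 * (r ^ 2 + |p * r| + |q|))),
    lipschitzWith_of_nnnorm_deriv_le ((contDiff_force k r p q).differentiable one_ne_zero)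
      fun θ => ?_⟩
  rw [← NNReal.coe_le_coe, coe_nnnorm]
  exact (hb θ).trans (Real.le_coe_toNNReal _)

lemma exists_theta (k r p q t₀ θ₀ ω₀ : ℝ) :
    ∃ θ ω : ℝ → ℝ, θ t₀ = θ₀ ∧ ω t₀ = ω₀ ∧ (∀ t, HasDerivAt θ (ω t) t) ∧
      ∀ t, HasDerivAt ω (force k r p q (θ t)) t := by
  obtain ⟨K, hK⟩ := exists_lipschitzWith_force k r p q
  have hf : ContDiff ℝ 1 (fun z : ℝ × ℝ => (z.2, force k r p q z.1)) :=
    contDiff_snd.prodMk ((contDiff_force k r p q).comp contDiff_fst)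
  obtain ⟨γ, h0, hγ⟩ := exists_global_solution hf
    (LipschitzWith.prod_snd.prodMk (hK.comp LipschitzWith.prod_fst)) t₀ (θ₀, ω₀)
  exact ⟨fun t => (γ t).1, fun t => (γ t).2, by simp [h0], by simp [h0],
    fun t => (hγ t).fst, fun t => (hγ t).snd⟩

lemma contDiff_two_of_hasDerivAt {f f' f'' : ℝ → ℝ} (h : ∀ t, HasDerivAt f (f' t) t)
    (h' : ∀ t, HasDerivAt f' (f'' t) t) (hc : Continuous f'') :
    ContDiff ℝ 2 f ∧ deriv f = f' ∧ iteratedDeriv 2 f = f'' := by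
  have e : deriv f = f' := funext fun t => (h t).deriv
  have e' : deriv f' = f'' := funext fun t => (h' t).deriv
  refine ⟨?_, e, ?_⟩
  · rw [show (2 : WithTop ℕ∞) = 1 + 1 by norm_num, contDiff_succ_iff_deriv]
    refine ⟨fun t => (h t).differentiableAt, by simp, ?_⟩
    rw [e, contDiff_one_iff_deriv, e']
    exact ⟨fun t => (h' t).differentiableAt, hc⟩
  · rw [iteratedDeriv_succ, iteratedDeriv_one, e, e']

/-- for τ < 0, the critical symplectic connection on ℝ² with B = D = 0,
A = α, C = γ is geodesically complete: every initial condition extends to a global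
solution of the geodesic equations. -/
theorem stmt7 (a p q τ : ℝ) (hτ : τ < 0)
    (t₀ x₀ y₀ v₀ w₀ : ℝ) :
    ∃ x y : ℝ → ℝ, ContDiff ℝ 2 x ∧ ContDiff ℝ 2 y ∧
      x t₀ = x₀ ∧ deriv x t₀ = v₀ ∧ y t₀ = y₀ ∧ deriv y t₀ = w₀ ∧
      ∀ t : ℝ,
        (iteratedDeriv 2 x t
            + ((x t + a) / (τ - (x t + a) ^ 2)) * (deriv x t) ^ 2
            + (-(1 / 6) * (τ - (x t + a) ^ 2)
                * ((x t + a) ^ 2 + p * (x t + a) + q)) * (deriv y t) ^ 2 = 0) ∧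
        (iteratedDeriv 2 y t
            - 2 * ((x t + a) / (τ - (x t + a) ^ 2)) * deriv x t * deriv y t = 0) := by
  have hC : ∀ s, Real.cosh s ≠ 0 := fun s => (Real.cosh_pos s).ne'
  obtain ⟨r, hr, rfl⟩ : ∃ r : ℝ, 0 < r ∧ τ = -r ^ 2 :=
    ⟨√(-τ), Real.sqrt_pos.2 (by linarith), by rw [Real.sq_sqrt (by linarith)]; ring⟩
  obtain ⟨θ₀, hθ₀⟩ : ∃ θ₀, r * Real.sinh θ₀ = x₀ + a :=
    ⟨Real.arsinh ((x₀ + a) / r), by rw [Real.sinh_arsinh]; field_simp⟩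
  -- the conserved quantity `((x + a) ^ 2 - τ) * y'`
  set c : ℝ := w₀ * (r ^ 2 * Real.cosh θ₀ ^ 2) with hc
  obtain ⟨θ, ω, hθ0, hω0, hθ, hω⟩ :=
    exists_theta (-(c ^ 2 / 6) / r ^ 3) r p q t₀ θ₀ (v₀ / (r * Real.cosh θ₀))
  have hθc : Continuous θ := continuous_iff_continuousAt.2 fun t => (hθ t).continuousAt
  have hωc : Continuous ω := continuous_iff_continuousAt.2 fun t => (hω t).continuousAt
  have hFc : Continuous fun t => force (-(c ^ 2 / 6) / r ^ 3) r p q (θ t) :=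
    (contDiff_force _ _ _ _).continuous.comp hθc
  have hSc : Continuous fun t => Real.sinh (θ t) := Real.continuous_sinh.comp hθc
  have hCc : Continuous fun t => Real.cosh (θ t) := Real.continuous_cosh.comp hθc
  have hCi : Continuous fun t => (Real.cosh (θ t))⁻¹ := hCc.inv₀ fun t => hC _
  set g : ℝ → ℝ := fun t => c / r ^ 2 * ((Real.cosh (θ t))⁻¹) ^ 2 with hg
  have hgc : Continuous g := by fun_prop
  have hx : ∀ t, HasDerivAt (fun t => r * Real.sinh (θ t) - a)
      (r * (Real.cosh (θ t) * ω t)) t := fun t =>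
    ((hθ t).sinh.const_mul r).sub_const a
  have hx' : ∀ t, HasDerivAt (fun t => r * (Real.cosh (θ t) * ω t))
      (r * (Real.sinh (θ t) * ω t * ω t
        + Real.cosh (θ t) * force (-(c ^ 2 / 6) / r ^ 3) r p q (θ t))) t := fun t =>
    ((hθ t).cosh.fun_mul (hω t)).const_mul r
  have hy : ∀ t, HasDerivAt (fun t => y₀ + ∫ s in t₀..t, g s) (g t) t := fun t =>
    (intervalIntegral.integral_hasDerivAt_right (hgc.intervalIntegrable _ _)
      hgc.aestronglyMeasurable.stronglyMeasurableAtFilter hgc.continuousAt).const_add y₀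
  have hy' : ∀ t, HasDerivAt g
      (c / r ^ 2 * (-2 * Real.sinh (θ t) * ω t * ((Real.cosh (θ t))⁻¹) ^ 3)) t := fun t => by
    refine ((((hθ t).cosh.fun_inv (hC _)).fun_pow 2).const_mul (c / r ^ 2)).congr_deriv ?_
    have := hC (θ t)
    norm_num
    field_simp
  obtain ⟨cx, dx, ddx⟩ := contDiff_two_of_hasDerivAt hx hx' (by fun_prop)
  obtain ⟨cy, dy, ddy⟩ := contDiff_two_of_hasDerivAt hy hy' (by fun_prop)
  refine ⟨_, _, cx, cy, ?_, ?_, ?_, ?_, fun t => ?_⟩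
  · simp [hθ0, hθ₀]
  · simp only [dx, hθ0, hω0]
    have := hC θ₀
    field_simp
  · simp
  · rw [dy]
    simp only [hg, hθ0, hc]
    have := hC θ₀
    field_simp
  · rw [dx, dy, ddx, ddy]
    have h1 := hC (θ t)
    have hm : -r ^ 2 - (r * Real.sinh (θ t) - a + a) ^ 2 = -(r ^ 2 * Real.cosh (θ t) ^ 2) := by
      rw [Real.cosh_sq]; ring
    rw [hm]
    simp only [hg, force, sub_add_cancel]
    constructor
    · field_simp
      ring
    · field_simp
      ring
end
end
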